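/- arXiv:1711.04474 — 5 statements merged into one kernel-verified Lean document; each statement's English description precedes it below -/
import Mathlib

section
/- For every persuasion problem (Ω, μ, A, u_S, u_R), every channel (X, Y, Q), and all integers n, k ≥ 1, the sender's optimal robust payoff satisfies U*_S(μ^n, Q^k) ≤ V(μ, (k/n)·C(Q)). -/
/-!
Fix a sender strategy `σ`, let `ω^n, x^k, y^k` have the induced joint law, and let `ν_{y,t}` be the
posterior of `ω_t` given `y^k = y`. Payoffs are additive over stages, so the receiver may choose at
each stage `t` separately an action that is optimal at `ν_{y,t}` and worst for the sender among
those; this is a best reply, and it yields the average of `uStar ν_{y,t}` with weights `P(y) / n`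
(`payoff_bound`). The weights and posteriors form a splitting of `μ`, so it remains to verify the
information constraint `∑_t I(ω_t; y^k) ≤ k C(Q)` (`information_bound`).

The usual chain (subadditivity of entropy, data processing, memorylessness of the channel) collapses
to one use of `log r ≤ r - 1` (`gibbs`). With `q_j` the law of `y_j`,
`∑_t I(ω_t; y^k) - ∑_j I(x_j; y_j)` is the expectation of the logarithm of
`∏_t ν_{y,t}(ω_t) ∏_j q_j(y_j) / (∏_t μ(ω_t) ∏_j Q(y_j | x_j))`, which is the density ratio of the
probability law `σ(x | ω) ∏_t ν_{y,t}(ω_t) ∏_j q_j(y_j)` (`sum_comparison`) to the true joint law.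
The expectation is therefore nonpositive, and each `I(x_j; y_j)` is at most the capacity
(`le_capacity`).
-/

open scoped BigOperators

/-- A probability distribution on a finite set. -/
structure PDist (S : Type*) [Fintype S] where
  p : S → ℝ
  nonneg : ∀ s, 0 ≤ p s
  sum_one : ∑ s, p s = 1

/-- Shannon entropy (base 2) of a distribution on a finite set. -/
noncomputable def entropy {S : Type*} [Fintype S] (q : PDist S) : ℝ :=
  -∑ s, q.p s * Real.logb 2 (q.p s)

/-- The output distribution of a channel `Q` fed with input distribution `q`. -/
noncomputable def mixDist {X Y : Type*} [Fintype X] [Fintype Y]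
    (q : PDist X) (Q : X → PDist Y) : PDist Y :=
  ⟨fun y => ∑ x, q.p x * (Q x).p y,
   fun y => Finset.sum_nonneg fun x _ => mul_nonneg (q.nonneg x) ((Q x).nonneg y),
   by
    show ∑ y, ∑ x, q.p x * (Q x).p y = 1
    rw [Finset.sum_comm]
    calc ∑ x, ∑ y, q.p x * (Q x).p y = ∑ x, q.p x := by
          refine Finset.sum_congr rfl fun x _ => ?_
          rw [← Finset.mul_sum, (Q x).sum_one, mul_one]
      _ = 1 := q.sum_one⟩

/-- The capacity of the channel `Q` : the maximal mutual information between
input and output over all input distributions. -/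
noncomputable def capacity {X Y : Type*} [Fintype X] [Fintype Y] (Q : X → PDist Y) : ℝ :=
  sSup { c : ℝ | ∃ q : PDist X, c = entropy (mixDist q Q) - ∑ x, q.p x * entropy (Q x) }

/-- The set of optimal actions of the receiver at belief `ν`. -/
def Astar {Ω A : Type*} [Fintype Ω] (uR : Ω → A → ℝ) (ν : PDist Ω) : Set A :=
  { a | ∀ b, ∑ ω, ν.p ω * uR ω b ≤ ∑ ω, ν.p ω * uR ω a }

/-- The robust payoff of the sender at belief `ν` : the worst expected sender payoff
over the receiver's optimal actions. -/
noncomputable def uStar {Ω A : Type*} [Fintype Ω] (uS uR : Ω → A → ℝ) (ν : PDist Ω) : ℝ :=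
  sInf { v | ∃ a ∈ Astar uR ν, v = ∑ ω, ν.p ω * uS ω a }

/-- `(lam, nu)` is a splitting of the prior `μ`. -/
def IsSplitting {Ω : Type*} [Fintype Ω] {K : ℕ}
    (lam : Fin K → ℝ) (nu : Fin K → PDist Ω) (μ : PDist Ω) : Prop :=
  (∀ m, 0 ≤ lam m) ∧ (∑ m, lam m = 1) ∧ (∀ ω, ∑ m, lam m * (nu m).p ω = μ.p ω)

/-- Value of the optimal splitting problem with information constraint `c`. -/
noncomputable def Vval {Ω A : Type*} [Fintype Ω] [Fintype A]
    (uS uR : Ω → A → ℝ) (μ : PDist Ω) (c : ℝ) : ℝ :=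
  sSup { v : ℝ | ∃ (K : ℕ) (lam : Fin K → ℝ) (nu : Fin K → PDist Ω),
    IsSplitting lam nu μ ∧
    entropy μ - ∑ m, lam m * entropy (nu m) ≤ c ∧
    v = ∑ m, lam m * uStar uS uR (nu m) }

/-- Average payoff over the `n` copies of the base problem. -/
noncomputable def avgPay {Ω A : Type*} (u : Ω → A → ℝ) {n : ℕ}
    (ω : Fin n → Ω) (a : Fin n → A) : ℝ :=
  (1 / (n : ℝ)) * ∑ t, u (ω t) (a t)

/-- Joint probability of `(ω^n, x^k, y^k)` under the i.i.d. prior, the sender's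
strategy `σ` and the memoryless channel `Q`. -/
noncomputable def jointP {Ω X Y : Type*} [Fintype Ω] [Fintype X] [Fintype Y]
    (μ : PDist Ω) (Q : X → PDist Y) {n k : ℕ}
    (σ : (Fin n → Ω) → PDist (Fin k → X))
    (ω : Fin n → Ω) (x : Fin k → X) (y : Fin k → Y) : ℝ :=
  (∏ t, μ.p (ω t)) * (σ ω).p x * ∏ t, (Q (x t)).p (y t)

/-- `τ` is a best reply of the receiver against the sender strategy `σ`. -/
def IsBR {Ω A X Y : Type*} [Fintype Ω] [Fintype A] [Fintype X] [Fintype Y]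
    (uR : Ω → A → ℝ) (μ : PDist Ω) (Q : X → PDist Y) {n k : ℕ}
    (σ : (Fin n → Ω) → PDist (Fin k → X))
    (τ : (Fin k → Y) → Fin n → A) : Prop :=
  ∀ (y : Fin k → Y) (a' : Fin n → A),
    ∑ ω, ∑ x, jointP μ Q σ ω x y * avgPay uR ω a' ≤
      ∑ ω, ∑ x, jointP μ Q σ ω x y * avgPay uR ω (τ y)

/-- Expected average sender payoff under `(σ, τ)`. -/
noncomputable def senderPayoff {Ω A X Y : Type*} [Fintype Ω] [Fintype A] [Fintype X] [Fintype Y]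
    (uS : Ω → A → ℝ) (μ : PDist Ω) (Q : X → PDist Y) {n k : ℕ}
    (σ : (Fin n → Ω) → PDist (Fin k → X))
    (τ : (Fin k → Y) → Fin n → A) : ℝ :=
  ∑ ω, ∑ x, ∑ y, jointP μ Q σ ω x y * avgPay uS ω (τ y)

/-- The optimal robust payoff of the sender in the game `Γ(n,k)`. -/
noncomputable def UstarS {Ω A X Y : Type*} [Fintype Ω] [Fintype A] [Fintype X] [Fintype Y]
    (uS uR : Ω → A → ℝ) (μ : PDist Ω) (Q : X → PDist Y) (n k : ℕ) : ℝ :=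
  sSup { v : ℝ | ∃ σ : (Fin n → Ω) → PDist (Fin k → X),
    v = sInf { w : ℝ | ∃ τ : (Fin k → Y) → Fin n → A,
      IsBR uR μ Q σ τ ∧ w = senderPayoff uS μ Q σ τ } }

/-! ### Push-forwards, conditional laws and product laws -/

namespace Persuasion

open Classical in
/-- The law of `f` when its argument has law `q`. -/
noncomputable def push {S T : Type*} [Fintype S] [Fintype T] (q : PDist S) (f : S → T) :
    PDist T :=
  ⟨fun t => ∑ s, if f s = t then q.p s else 0,
   fun t => Finset.sum_nonneg fun s _ => by
    split_ifs
    · exact q.nonneg s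
    · exact le_rfl,
   by
    rw [Finset.sum_comm]
    simpa using q.sum_one⟩

theorem push_expect {S T : Type*} [Fintype S] [Fintype T] (q : PDist S) (f : S → T)
    (g : T → ℝ) : ∑ t, (push q f).p t * g t = ∑ s, q.p s * g (f s) := by
  classical
  simp only [push, Finset.sum_mul]
  rw [Finset.sum_comm]
  refine Finset.sum_congr rfl fun s _ => ?_
  rw [Finset.sum_eq_single (f s)]
  · simp
  · intro t _ h
    simp [h.symm]
  · simp

theorem push_pos {S T : Type*} [Fintype S] [Fintype T] (q : PDist S) (f : S → T) {s : S}
    (h : 0 < q.p s) : 0 < (push q f).p (f s) := by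
  classical
  refine Finset.sum_pos' (fun t _ => ?_) ⟨s, Finset.mem_univ _, by simpa using h⟩
  split_ifs
  · exact q.nonneg t
  · exact le_rfl

theorem push_pair_fst {S T U : Type*} [Fintype S] [Fintype T] [Fintype U] (q : PDist S)
    (g : S → T) (f : S → U) (t : T) :
    ∑ u, (push q fun s => (g s, f s)).p (t, u) = (push q g).p t := by
  classical
  simp only [push]
  rw [Finset.sum_comm]
  refine Finset.sum_congr rfl fun s _ => ?_
  simp only [Prod.mk.injEq]
  by_cases h : g s = t <;> simp [h]

open Classical in
/-- The conditional law of `f` given `g = t` under `q`. When `g = t` has probability zero it is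
taken to be the unconditional law of `f`. -/
noncomputable def condLaw {S T U : Type*} [Fintype S] [Fintype T] [Fintype U] (q : PDist S)
    (g : S → T) (f : S → U) (t : T) : PDist U :=
  if h : (push q g).p t = 0 then push q f else
  ⟨fun u => (push q fun s => (g s, f s)).p (t, u) / (push q g).p t,
   fun _ => div_nonneg (PDist.nonneg _ _) (PDist.nonneg _ _),
   by rw [← Finset.sum_div, push_pair_fst, div_self h]⟩

theorem mul_condLaw {S T U : Type*} [Fintype S] [Fintype T] [Fintype U] (q : PDist S)
    (g : S → T) (f : S → U) (t : T) (u : U) :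
    (push q g).p t * (condLaw q g f t).p u = (push q fun s => (g s, f s)).p (t, u) := by
  unfold condLaw
  split_ifs with h
  · have h1 := push_pair_fst q g f t
    rw [h, Finset.sum_eq_zero_iff_of_nonneg fun _ _ => PDist.nonneg _ _] at h1
    rw [h, zero_mul, h1 u (Finset.mem_univ _)]
  · exact mul_div_cancel₀ _ h

theorem condLaw_pos {S T U : Type*} [Fintype S] [Fintype T] [Fintype U] (q : PDist S)
    (g : S → T) (f : S → U) {s : S} (h : 0 < q.p s) :
    0 < (condLaw q g f (g s)).p (f s) := by
  have h1 := push_pos q (fun s => (g s, f s)) h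
  rw [← mul_condLaw] at h1
  exact pos_of_mul_pos_right h1 (PDist.nonneg _ _)

theorem condLaw_expect {S T U : Type*} [Fintype S] [Fintype T] [Fintype U] (q : PDist S)
    (g : S → T) (f : S → U) (F : T → U → ℝ) :
    ∑ t, (push q g).p t * ∑ u, (condLaw q g f t).p u * F t u
      = ∑ s, q.p s * F (g s) (f s) := by
  rw [← push_expect q (fun s => (g s, f s)) (fun z => F z.1 z.2), Fintype.sum_prod_type]
  refine Finset.sum_congr rfl fun t _ => ?_
  rw [Finset.mul_sum]
  refine Finset.sum_congr rfl fun u _ => ?_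
  rw [← mul_assoc, mul_condLaw]

theorem sum_prod_eq_one {ι S : Type*} [Fintype ι] [Fintype S] [DecidableEq ι]
    (p : ι → PDist S) : ∑ w : ι → S, ∏ i, (p i).p (w i) = 1 := by
  have h := Fintype.prod_sum (fun i s => (p i).p s)
  rw [← h]
  simp [PDist.sum_one]

/-- Under a product law each coordinate has the corresponding factor as its law. -/
theorem prod_marginal {ι S : Type*} [Fintype ι] [Fintype S] [DecidableEq ι]
    (p : ι → PDist S) (i : ι) (g : S → ℝ) :
    ∑ w : ι → S, (∏ j, (p j).p (w j)) * g (w i) = ∑ s, (p i).p s * g s := by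
  have h := Fintype.prod_sum (fun j s => (p j).p s * if j = i then g s else 1)
  simp only [Finset.prod_mul_distrib] at h
  simp only [Finset.prod_ite_eq', Finset.mem_univ, if_true] at h
  rw [← h, Finset.prod_eq_single i]
  · simp
  · intro j _ hj
    simp [hj, PDist.sum_one]
  · simp

/-! ### Entropy, capacity and the robust payoff -/

theorem PDist_le_one {S : Type*} [Fintype S] (q : PDist S) (s : S) : q.p s ≤ 1 := by
  rw [← q.sum_one]
  exact Finset.single_le_sum (f := q.p) (fun t _ => q.nonneg t) (Finset.mem_univ s)

theorem log_two_pos : 0 < Real.log 2 := Real.log_pos (by norm_num)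

theorem entropy_nonneg {S : Type*} [Fintype S] (q : PDist S) : 0 ≤ entropy q := by
  unfold entropy
  rw [neg_nonneg]
  exact Finset.sum_nonpos fun s _ => mul_nonpos_of_nonneg_of_nonpos (q.nonneg s)
    (div_nonpos_of_nonpos_of_nonneg (Real.log_nonpos (q.nonneg s) (PDist_le_one q s))
      log_two_pos.le)

theorem entropy_le {S : Type*} [Fintype S] (q : PDist S) :
    entropy q ≤ ∑ _s : S, 1 / Real.log 2 := by
  unfold entropy
  rw [← Finset.sum_neg_distrib]
  refine Finset.sum_le_sum fun s _ => ?_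
  rw [Real.logb, ← mul_div_assoc, ← neg_div]
  refine div_le_div_of_nonneg_right ?_ log_two_pos.le
  rcases (q.nonneg s).eq_or_lt with h | h
  · simp [← h]
  · have h1 := Real.log_le_sub_one_of_pos (inv_pos.2 h)
    rw [Real.log_inv] at h1
    have h2 := mul_le_mul_of_nonneg_left h1 h.le
    have h3 : q.p s * ((q.p s)⁻¹ - 1) = 1 - q.p s := by field_simp
    linarith

theorem le_capacity {X Y : Type*} [Fintype X] [Fintype Y] (Q : X → PDist Y) (q : PDist X) :
    entropy (mixDist q Q) - ∑ x, q.p x * entropy (Q x) ≤ capacity Q := by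
  refine le_csSup ⟨∑ _y : Y, 1 / Real.log 2, ?_⟩ ⟨q, rfl⟩
  rintro _ ⟨q, rfl⟩
  have h1 := entropy_le (mixDist q Q)
  have h2 : 0 ≤ ∑ x, q.p x * entropy (Q x) :=
    Finset.sum_nonneg fun x _ => mul_nonneg (q.nonneg x) (entropy_nonneg _)
  linarith

theorem exists_uStar {Ω A : Type*} [Fintype Ω] [Fintype A] [Nonempty A]
    (uS uR : Ω → A → ℝ) (ν : PDist Ω) :
    ∃ a ∈ Astar uR ν, uStar uS uR ν = ∑ ω, ν.p ω * uS ω a := by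
  have hne : (Astar uR ν).Nonempty := Finite.exists_max (fun a => ∑ ω, ν.p ω * uR ω a)
  have hfin : { v | ∃ a ∈ Astar uR ν, v = ∑ ω, ν.p ω * uS ω a }.Finite :=
    (Set.finite_range fun a => ∑ ω, ν.p ω * uS ω a).subset (by
      rintro _ ⟨a, _, rfl⟩
      exact ⟨a, rfl⟩)
  obtain ⟨a, ha⟩ := hne
  have hv : { v | ∃ a ∈ Astar uR ν, v = ∑ ω, ν.p ω * uS ω a }.Nonempty := ⟨_, a, ha, rfl⟩
  exact hv.csInf_mem hfin

theorem uStar_le {Ω A : Type*} [Fintype Ω] [Fintype A] [Nonempty A]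
    (uS uR : Ω → A → ℝ) (ν : PDist Ω) :
    uStar uS uR ν ≤ ∑ ω, ∑ a, |uS ω a| := by
  obtain ⟨a, _, h⟩ := exists_uStar uS uR ν
  rw [h]
  refine Finset.sum_le_sum fun ω _ => ?_
  calc ν.p ω * uS ω a ≤ ν.p ω * |uS ω a| :=
        mul_le_mul_of_nonneg_left (le_abs_self _) (ν.nonneg ω)
    _ ≤ |uS ω a| := mul_le_of_le_one_left (abs_nonneg _) (PDist_le_one ν ω)
    _ ≤ _ := Finset.single_le_sum (f := fun a => |uS ω a|) (fun _ _ => abs_nonneg _)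
        (Finset.mem_univ a)

/-- A splitting indexed by any finite type that satisfies the information constraint gives a
lower bound for `Vval`. -/
theorem le_Vval {Ω A I : Type*} [Fintype Ω] [Fintype A] [Nonempty A] [Fintype I]
    (uS uR : Ω → A → ℝ) (μ : PDist Ω) (c : ℝ) (lam : I → ℝ) (nu : I → PDist Ω)
    (h0 : ∀ i, 0 ≤ lam i) (h1 : ∑ i, lam i = 1) (h2 : ∀ ω, ∑ i, lam i * (nu i).p ω = μ.p ω)
    (h3 : entropy μ - ∑ i, lam i * entropy (nu i) ≤ c) :
    ∑ i, lam i * uStar uS uR (nu i) ≤ Vval uS uR μ c := by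
  let e := (Fintype.equivFin I).symm
  refine le_csSup ⟨∑ ω, ∑ a, |uS ω a|, ?_⟩
    ⟨_, lam ∘ e, nu ∘ e, ⟨fun m => h0 _, ?_, fun ω => ?_⟩, ?_, ?_⟩
  · rintro _ ⟨K, l, v, hs, _, rfl⟩
    calc ∑ m, l m * uStar uS uR (v m) ≤ ∑ m, l m * ∑ ω, ∑ a, |uS ω a| :=
          Finset.sum_le_sum fun m _ => mul_le_mul_of_nonneg_left (uStar_le _ _ _) (hs.1 m)
      _ = _ := by rw [← Finset.sum_mul, hs.2.1, one_mul]
  · rw [← h1]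
    exact e.sum_comp lam
  · rw [← h2]
    exact e.sum_comp fun i => lam i * (nu i).p ω
  · refine le_of_eq_of_le ?_ h3
    exact congrArg _ (e.sum_comp fun i => lam i * entropy (nu i))
  · exact (e.sum_comp fun i => lam i * uStar uS uR (nu i)).symm

/-! ### The joint law of states, inputs and outputs -/

section Joint

variable {Ω X Y : Type*} [Fintype Ω] [Fintype X] [Fintype Y]
  (μ : PDist Ω) (Q : X → PDist Y) {n k : ℕ} (σ : (Fin n → Ω) → PDist (Fin k → X))

theorem jointP_nonneg (ω : Fin n → Ω) (x : Fin k → X) (y : Fin k → Y) :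
    0 ≤ jointP μ Q σ ω x y :=
  mul_nonneg (mul_nonneg (Finset.prod_nonneg fun _ _ => μ.nonneg _) ((σ ω).nonneg x))
    (Finset.prod_nonneg fun _ _ => (Q _).nonneg _)

theorem sum_jointP_y (ω : Fin n → Ω) (x : Fin k → X) :
    ∑ y, jointP μ Q σ ω x y = (∏ t, μ.p (ω t)) * (σ ω).p x := by
  simp only [jointP]
  rw [← Finset.mul_sum, sum_prod_eq_one (fun t => Q (x t)), mul_one]

theorem sum_jointP_xy (ω : Fin n → Ω) :
    ∑ x, ∑ y, jointP μ Q σ ω x y = ∏ t, μ.p (ω t) := by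
  simp only [sum_jointP_y]
  rw [← Finset.mul_sum, (σ ω).sum_one, mul_one]

/-- The joint law of `(ω^n, x^k, y^k)`. -/
noncomputable def joint : PDist ((Fin n → Ω) × (Fin k → X) × (Fin k → Y)) :=
  ⟨fun z => jointP μ Q σ z.1 z.2.1 z.2.2, fun _ => jointP_nonneg _ _ _ _ _ _, by
    simp only [Fintype.sum_prod_type, sum_jointP_xy]
    exact sum_prod_eq_one fun _ => μ⟩

/-- The law of the `k` outputs. -/
noncomputable def outLaw : PDist (Fin k → Y) := push (joint μ Q σ) fun z => z.2.2

/-- The posterior law of the state `ω_t` given the outputs. -/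
noncomputable def post (y : Fin k → Y) (t : Fin n) : PDist Ω :=
  condLaw (joint μ Q σ) (fun z => z.2.2) (fun z => z.1 t) y

/-- The law of the input `x_j`. -/
noncomputable def inLaw (j : Fin k) : PDist X := push (joint μ Q σ) fun z => z.2.1 j

theorem joint_state (t : Fin n) (g : Ω → ℝ) :
    ∑ z, (joint μ Q σ).p z * g (z.1 t) = ∑ s, μ.p s * g s := by
  simp only [Fintype.sum_prod_type, joint]
  rw [← prod_marginal (fun _ => μ) t g]
  refine Finset.sum_congr rfl fun ω _ => ?_
  rw [← sum_jointP_xy μ Q σ ω]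
  simp only [Finset.sum_mul]

/-- The conditional law of `y_j` given `x_j` is the one-letter channel. -/
theorem joint_channel (j : Fin k) (g : X → Y → ℝ) :
    ∑ z, (joint μ Q σ).p z * g (z.2.1 j) (z.2.2 j)
      = ∑ a, (inLaw μ Q σ j).p a * ∑ b, (Q a).p b * g a b := by
  rw [inLaw, push_expect (joint μ Q σ) (fun z => z.2.1 j) (fun a => ∑ b, (Q a).p b * g a b)]
  simp only [Fintype.sum_prod_type, joint]
  refine Finset.sum_congr rfl fun ω _ => Finset.sum_congr rfl fun x _ => ?_
  rw [← Finset.sum_mul, sum_jointP_y, ← prod_marginal (fun i => Q (x i)) j (g (x j)),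
    Finset.mul_sum]
  refine Finset.sum_congr rfl fun y _ => ?_
  rw [jointP]
  ring

theorem post_expect (t : Fin n) (F : (Fin k → Y) → Ω → ℝ) :
    ∑ y, (outLaw μ Q σ).p y * ∑ s, (post μ Q σ y t).p s * F y s
      = ∑ z, (joint μ Q σ).p z * F z.2.2 (z.1 t) :=
  condLaw_expect (joint μ Q σ) (fun z => z.2.2) (fun z => z.1 t) F

/-- Given the outputs, the expectation of a function of `ω_t` is its posterior expectation. -/
theorem post_expect_at (t : Fin n) (y : Fin k → Y) (g : Ω → ℝ) :
    ∑ ω, ∑ x, jointP μ Q σ ω x y * g (ω t)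
      = (outLaw μ Q σ).p y * ∑ s, (post μ Q σ y t).p s * g s := by
  classical
  have h := post_expect μ Q σ t (fun y' s => if y' = y then g s else 0)
  rw [Finset.sum_eq_single y (fun y' _ hy => by simp [hy]) (by simp)] at h
  simp only [if_true] at h
  rw [h]
  simp [Fintype.sum_prod_type, joint]

theorem avgPay_at {A : Type*} (u : Ω → A → ℝ) (y : Fin k → Y) (a : Fin n → A) :
    ∑ ω, ∑ x, jointP μ Q σ ω x y * avgPay u ω a
      = (1 / (n : ℝ)) * ∑ t, (outLaw μ Q σ).p y * ∑ s, (post μ Q σ y t).p s * u s (a t) := by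
  simp only [← post_expect_at μ Q σ _ y (fun s => u s (a _))]
  simp only [avgPay, Finset.mul_sum]
  conv_lhs => enter [2, ω]; rw [Finset.sum_comm]
  rw [Finset.sum_comm]
  refine Finset.sum_congr rfl fun t _ => ?_
  refine Finset.sum_congr rfl fun ω _ => Finset.sum_congr rfl fun x _ => ?_
  ring

theorem mixDist_pos {z : (Fin n → Ω) × (Fin k → X) × (Fin k → Y)}
    (h : 0 < (joint μ Q σ).p z) (j : Fin k) (hQ : 0 < (Q (z.2.1 j)).p (z.2.2 j)) :
    0 < (mixDist (inLaw μ Q σ j) Q).p (z.2.2 j) :=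
  Finset.sum_pos' (fun _ _ => mul_nonneg (PDist.nonneg _ _) (PDist.nonneg _ _))
    ⟨z.2.1 j, Finset.mem_univ _, mul_pos (push_pos (joint μ Q σ) (fun z => z.2.1 j) h) hQ⟩

/-- The law under which `y_1, …, y_k` are independent with the laws of the individual outputs,
`ω_1, …, ω_n` are conditionally independent given `y^k` with the posteriors as laws, and
`x^k` follows `σ(ω^n)`, has total mass one. -/
theorem sum_comparison :
    ∑ z : (Fin n → Ω) × (Fin k → X) × (Fin k → Y), (σ z.1).p z.2.1 *
      (∏ t, (post μ Q σ z.2.2 t).p (z.1 t)) *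
      ∏ j, (mixDist (inLaw μ Q σ j) Q).p (z.2.2 j) = 1 := by
  have h : ∀ y : Fin k → Y, ∑ ω, ∑ x, (σ ω).p x * (∏ t, (post μ Q σ y t).p (ω t)) *
      ∏ j, (mixDist (inLaw μ Q σ j) Q).p (y j) = ∏ j, (mixDist (inLaw μ Q σ j) Q).p (y j) := by
    intro y
    simp only [← Finset.sum_mul, PDist.sum_one, one_mul]
    rw [sum_prod_eq_one (fun t => post μ Q σ y t), one_mul]
  simp only [Fintype.sum_prod_type]
  conv_lhs => enter [2, ω]; rw [Finset.sum_comm]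
  rw [Finset.sum_comm]
  simp only [h]
  exact sum_prod_eq_one _

/-- Gibbs' inequality between the true joint law and the law of `sum_comparison`. -/
theorem gibbs :
    ∑ z, (joint μ Q σ).p z *
      ((∑ t, Real.logb 2 ((post μ Q σ z.2.2 t).p (z.1 t)))
        + (∑ j, Real.logb 2 ((mixDist (inLaw μ Q σ j) Q).p (z.2.2 j)))
        - (∑ t, Real.logb 2 (μ.p (z.1 t)))
        - (∑ j, Real.logb 2 ((Q (z.2.1 j)).p (z.2.2 j)))) ≤ 0 := by
  have key : ∀ z, (joint μ Q σ).p z *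
      ((∑ t, Real.logb 2 ((post μ Q σ z.2.2 t).p (z.1 t)))
        + (∑ j, Real.logb 2 ((mixDist (inLaw μ Q σ j) Q).p (z.2.2 j)))
        - (∑ t, Real.logb 2 (μ.p (z.1 t)))
        - (∑ j, Real.logb 2 ((Q (z.2.1 j)).p (z.2.2 j))))
      ≤ ((σ z.1).p z.2.1 * (∏ t, (post μ Q σ z.2.2 t).p (z.1 t)) *
        (∏ j, (mixDist (inLaw μ Q σ j) Q).p (z.2.2 j)) - (joint μ Q σ).p z) / Real.log 2 := by
    intro z
    rcases ((joint μ Q σ).nonneg z).eq_or_lt with h | h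
    · rw [← h, zero_mul, sub_zero]
      refine div_nonneg (mul_nonneg (mul_nonneg (PDist.nonneg _ _) ?_) ?_) log_two_pos.le
      · exact Finset.prod_nonneg fun _ _ => PDist.nonneg _ _
      · exact Finset.prod_nonneg fun _ _ => PDist.nonneg _ _
    · have hJ : (joint μ Q σ).p z
          = (∏ t, μ.p (z.1 t)) * (σ z.1).p z.2.1 * ∏ j, (Q (z.2.1 j)).p (z.2.2 j) := rfl
      have hne := h.ne'
      rw [hJ] at hne
      have hσ : (σ z.1).p z.2.1 ≠ 0 := right_ne_zero_of_mul (left_ne_zero_of_mul hne)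
      have hM : (∏ t, μ.p (z.1 t)) ≠ 0 := left_ne_zero_of_mul (left_ne_zero_of_mul hne)
      have hQ : (∏ j, (Q (z.2.1 j)).p (z.2.2 j)) ≠ 0 := right_ne_zero_of_mul hne
      have hM' : ∀ t, μ.p (z.1 t) ≠ 0 := fun t => Finset.prod_ne_zero_iff.1 hM t (by simp)
      have hQ' : ∀ j, (Q (z.2.1 j)).p (z.2.2 j) ≠ 0 :=
        fun j => Finset.prod_ne_zero_iff.1 hQ j (by simp)
      have hN' : ∀ t, 0 < (post μ Q σ z.2.2 t).p (z.1 t) := fun t =>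
        condLaw_pos (joint μ Q σ) (fun z => z.2.2) (fun z => z.1 t) h
      have hR' : ∀ j, 0 < (mixDist (inLaw μ Q σ j) Q).p (z.2.2 j) := fun j =>
        mixDist_pos μ Q σ h j (lt_of_le_of_ne (PDist.nonneg _ _) (hQ' j).symm)
      have hN := Finset.prod_pos fun t (_ : t ∈ Finset.univ) => hN' t
      have hR := Finset.prod_pos fun j (_ : j ∈ Finset.univ) => hR' j
      have hMp := lt_of_le_of_ne (Finset.prod_nonneg fun t _ => μ.nonneg (z.1 t)) hM.symm
      have hQp := lt_of_le_of_ne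
        (Finset.prod_nonneg fun j _ => (Q (z.2.1 j)).nonneg (z.2.2 j)) hQ.symm
      simp only [Real.logb, ← Finset.sum_div]
      rw [← Real.log_prod fun t _ => (hN' t).ne', ← Real.log_prod fun j _ => (hR' j).ne',
        ← Real.log_prod fun t _ => hM' t, ← Real.log_prod fun j _ => hQ' j, ← add_div, ← sub_div,
        ← sub_div, ← Real.log_mul hN.ne' hR.ne', ← Real.log_div (mul_pos hN hR).ne' hM,
        ← Real.log_div (div_pos (mul_pos hN hR) hMp).ne' hQ, ← mul_div_assoc]
      refine div_le_div_of_nonneg_right ?_ log_two_pos.le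
      refine (mul_le_mul_of_nonneg_left (Real.log_le_sub_one_of_pos
        (div_pos (div_pos (mul_pos hN hR) hMp) hQp)) h.le).trans_eq ?_
      rw [hJ]
      field_simp
  refine (Finset.sum_le_sum fun z _ => key z).trans_eq ?_
  rw [← Finset.sum_div, Finset.sum_sub_distrib, sum_comparison, (joint μ Q σ).sum_one]
  simp

/-- The sum over `t` of the mutual informations between `ω_t` and `y^k` is at most `k` times
the capacity. -/
theorem information_bound :
    n * entropy μ - ∑ t, ∑ y, (outLaw μ Q σ).p y * entropy (post μ Q σ y t)
      ≤ k * capacity Q := by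
  have h := gibbs μ Q σ
  simp only [mul_sub, mul_add, Finset.sum_sub_distrib, Finset.sum_add_distrib,
    Finset.mul_sum] at h
  rw [Finset.sum_comm, Finset.sum_comm (t := (Finset.univ : Finset (Fin k))),
    Finset.sum_comm (t := (Finset.univ : Finset (Fin n))),
    Finset.sum_comm (t := (Finset.univ : Finset (Fin k)))] at h
  have e1 : ∀ t : Fin n, ∑ z, (joint μ Q σ).p z * Real.logb 2 ((post μ Q σ z.2.2 t).p (z.1 t))
      = - ∑ y, (outLaw μ Q σ).p y * entropy (post μ Q σ y t) := by
    intro t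
    rw [← post_expect μ Q σ t (fun y s => Real.logb 2 ((post μ Q σ y t).p s)),
      ← Finset.sum_neg_distrib]
    simp [entropy]
  have e2 : ∀ j : Fin k, ∑ z, (joint μ Q σ).p z *
      Real.logb 2 ((mixDist (inLaw μ Q σ j) Q).p (z.2.2 j))
      = - entropy (mixDist (inLaw μ Q σ j) Q) := by
    intro j
    rw [joint_channel μ Q σ j (fun _ b => Real.logb 2 ((mixDist (inLaw μ Q σ j) Q).p b))]
    simp only [entropy, neg_neg, Finset.mul_sum]
    rw [Finset.sum_comm]
    refine Finset.sum_congr rfl fun b _ => ?_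
    simp only [← mul_assoc, ← Finset.sum_mul]
    rfl
  have e3 : ∀ t : Fin n, ∑ z, (joint μ Q σ).p z * Real.logb 2 (μ.p (z.1 t)) = - entropy μ := by
    intro t
    rw [joint_state μ Q σ t (fun s => Real.logb 2 (μ.p s)), entropy, neg_neg]
  have e4 : ∀ j : Fin k, ∑ z, (joint μ Q σ).p z * Real.logb 2 ((Q (z.2.1 j)).p (z.2.2 j))
      = - ∑ x, (inLaw μ Q σ j).p x * entropy (Q x) := by
    intro j
    rw [joint_channel μ Q σ j (fun a b => Real.logb 2 ((Q a).p b)), ← Finset.sum_neg_distrib]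
    simp [entropy]
  simp only [e1, e2, e3, e4, Finset.sum_neg_distrib] at h
  have hc := Finset.sum_le_sum fun j (_ : j ∈ Finset.univ) => le_capacity Q (inLaw μ Q σ j)
  simp only [Finset.sum_sub_distrib, Finset.sum_const, Finset.card_univ, Fintype.card_fin,
    nsmul_eq_mul] at h hc
  linarith

end Joint

/-- Against any sender strategy, the least favourable best reply yields at most `Vval`. -/
theorem payoff_bound {Ω A X Y : Type*}
    [Fintype Ω] [Fintype A] [Fintype X] [Fintype Y] [Nonempty A]
    (uS uR : Ω → A → ℝ) (μ : PDist Ω) (Q : X → PDist Y) {n k : ℕ} (hn : 1 ≤ n)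
    (σ : (Fin n → Ω) → PDist (Fin k → X)) :
    sInf { w : ℝ | ∃ τ : (Fin k → Y) → Fin n → A,
      IsBR uR μ Q σ τ ∧ w = senderPayoff uS μ Q σ τ }
      ≤ Vval uS uR μ ((k : ℝ) / (n : ℝ) * capacity Q) := by
  have hn0 : (0 : ℝ) < n := by exact_mod_cast hn
  choose τ hτ hτS using fun (y : Fin k → Y) (t : Fin n) => exists_uStar uS uR (post μ Q σ y t)
  have hBR : IsBR uR μ Q σ τ := by
    intro y a'
    rw [avgPay_at, avgPay_at]
    refine mul_le_mul_of_nonneg_left (Finset.sum_le_sum fun t _ => ?_) (by positivity)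
    exact mul_le_mul_of_nonneg_left (hτ y t (a' t)) (PDist.nonneg _ _)
  have hpay : senderPayoff uS μ Q σ τ = ∑ i : (Fin k → Y) × Fin n,
      (outLaw μ Q σ).p i.1 / n * uStar uS uR (post μ Q σ i.1 i.2) := by
    have h1 : senderPayoff uS μ Q σ τ
        = ∑ y, ∑ ω, ∑ x, jointP μ Q σ ω x y * avgPay uS ω (τ y) := by
      unfold senderPayoff
      conv_lhs => enter [2, ω]; rw [Finset.sum_comm]
      rw [Finset.sum_comm]
    rw [h1, Fintype.sum_prod_type]
    refine Finset.sum_congr rfl fun y _ => ?_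
    rw [avgPay_at, Finset.mul_sum]
    refine Finset.sum_congr rfl fun t _ => ?_
    rw [hτS]
    ring
  have hmem : senderPayoff uS μ Q σ τ ∈ { w : ℝ | ∃ τ : (Fin k → Y) → Fin n → A,
      IsBR uR μ Q σ τ ∧ w = senderPayoff uS μ Q σ τ } := ⟨τ, hBR, rfl⟩
  refine (csInf_le ?_ hmem).trans ?_
  · refine ((Set.finite_range fun τ => senderPayoff uS μ Q σ τ).subset ?_).bddBelow
    rintro _ ⟨τ, _, rfl⟩
    exact ⟨τ, rfl⟩
  rw [hpay]
  refine le_Vval uS uR μ _ (fun i : (Fin k → Y) × Fin n => (outLaw μ Q σ).p i.1 / n)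
    (fun i => post μ Q σ i.1 i.2) (fun i => div_nonneg (PDist.nonneg _ _) hn0.le) ?_ ?_ ?_
  · rw [Fintype.sum_prod_type]
    simp [mul_div_cancel₀ _ hn0.ne', PDist.sum_one]
  · classical
    intro ω
    have h2 : ∀ t : Fin n, ∑ y, (outLaw μ Q σ).p y * (post μ Q σ y t).p ω = μ.p ω := by
      intro t
      have h3 := post_expect μ Q σ t (fun _ s => if s = ω then 1 else 0)
      rw [joint_state μ Q σ t (fun s => if s = ω then 1 else 0)] at h3
      simpa using h3
    rw [Fintype.sum_prod_type, Finset.sum_comm]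
    simp only [div_mul_eq_mul_div, ← Finset.sum_div, h2]
    simp [mul_div_cancel_left₀ _ hn0.ne']
  · have h4 := information_bound μ Q σ
    rw [Fintype.sum_prod_type, Finset.sum_comm]
    simp only [div_mul_eq_mul_div, ← Finset.sum_div]
    rw [le_div_iff₀ hn0, sub_mul, div_mul_cancel₀ _ hn0.ne']
    linarith

end Persuasion

/-- Theorem 1.1 of the paper: for every persuasion problem, every
channel and all `n, k ≥ 1`, the sender's optimal robust payoff is bounded above by the
value of the optimal splitting problem with information constraint `(k/n)·C(Q)`. -/
theorem persuasion_upper_bound {Ω A X Y : Type*}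
    [Fintype Ω] [Fintype A] [Fintype X] [Fintype Y]
    [Nonempty Ω] [Nonempty A] [Nonempty X] [Nonempty Y]
    (uS uR : Ω → A → ℝ) (μ : PDist Ω) (Q : X → PDist Y)
    (n k : ℕ) (hn : 1 ≤ n) (hk : 1 ≤ k) :
    UstarS uS uR μ Q n k ≤ Vval uS uR μ ((k : ℝ) / (n : ℝ) * capacity Q) := by
  classical
  refine csSup_le ?_ ?_
  · let x₀ : Fin k → X := fun _ => Classical.arbitrary X
    exact ⟨_, fun _ => ⟨fun x => if x = x₀ then 1 else 0,
      fun x => by split_ifs <;> norm_num, by simp⟩, rfl⟩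
  · rintro _ ⟨σ, rfl⟩
    exact Persuasion.payoff_bound uS uR μ Q hn σ
end

section
/- Let X ⊆ ℝ^d be convex and f, g : X → ℝ ∪ {−∞}. Then for every (x, γ) ∈ X × ℝ, F^g(x, γ) = cav f^g(x, γ), where cav f^g is the concavification of the bivariate function f^g on X × ℝ. -/
/-!
Both sides are suprema over finite weighted families, and families with a `-∞` value do not matter.
A decomposition `(x_m, γ_m)` of `(x, γ)` of value `> -∞` has `γ_m ≤ g (x_m)` whenever `λ_m > 0`;
averaging yields the constraint `γ ≤ ∑ λ_m g (x_m)`. Conversely, under that constraint `g (x_m)`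
is real whenever `λ_m > 0`, and lowering all these values by the common slack
`∑ λ_m g (x_m) - γ ≥ 0` gives second coordinates with average exactly `γ`. Indices with
`λ_m = 0` are harmless because `0 * ⊥ = 0` in `EReal`.
-/

open scoped BigOperators

/-- Concavification of an `EReal`-valued function `h` over the convex domain `C`:
the supremum of `Σ λ_m h(z_m)` over finite convex decompositions of `z` with points in `C`. -/
noncomputable def cav {V : Type*} [AddCommMonoid V] [Module ℝ V]
    (C : Set V) (h : V → EReal) (z : V) : EReal :=
  sSup { v : EReal | ∃ (K : ℕ) (lam : Fin K → ℝ) (pts : Fin K → V),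
    (∀ m, 0 ≤ lam m) ∧ (∑ m, lam m = 1) ∧ (∀ m, pts m ∈ C) ∧
    (∑ m, lam m • pts m = z) ∧
    v = ∑ m, (lam m : EReal) * h (pts m) }

/-- The constrained splitting value `F^g(x, γ)` : the supremum of `Σ λ_m f(x_m)` over
splittings of `x` with points in `X` satisfying `Σ λ_m g(x_m) ≥ γ`. -/
noncomputable def Fg {d : ℕ} (X : Set (Fin d → ℝ)) (f g : (Fin d → ℝ) → EReal)
    (x : Fin d → ℝ) (γ : ℝ) : EReal :=
  sSup { v : EReal | ∃ (K : ℕ) (lam : Fin K → ℝ) (pts : Fin K → (Fin d → ℝ)),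
    (∀ m, 0 ≤ lam m) ∧ (∑ m, lam m = 1) ∧ (∀ m, pts m ∈ X) ∧
    (∑ m, lam m • pts m = x) ∧
    ((γ : EReal) ≤ ∑ m, (lam m : EReal) * g (pts m)) ∧
    v = ∑ m, (lam m : EReal) * f (pts m) }

open scoped Classical

/-- The auxiliary bivariate function `f^g(x, γ) = f(x)` if `γ ≤ g(x)` and `−∞` otherwise. -/
noncomputable def fgAux {d : ℕ} (f g : (Fin d → ℝ) → EReal) : (Fin d → ℝ) × ℝ → EReal :=
  fun p => if (p.2 : EReal) ≤ g p.1 then f p.1 else ⊥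

/-- A weighted sum above `-∞` takes no value `-∞` at an index of positive weight. -/
lemma ne_bot_of_weighted_sum_ne_bot {K : ℕ} {lam : Fin K → ℝ} {u : Fin K → EReal}
    (h : ∑ m, (lam m : EReal) * u m ≠ ⊥) {m : Fin K} (hm : 0 < lam m) : u m ≠ ⊥ := by
  intro hu
  apply h
  rw [← Finset.add_sum_erase _ _ (Finset.mem_univ m), hu, EReal.coe_mul_bot_of_pos hm,
    EReal.bot_add]

lemma coe_weighted_sum {K : ℕ} (lam c : Fin K → ℝ) :
    ((∑ m, lam m * c m : ℝ) : EReal) = ∑ m, (lam m : EReal) * (c m : EReal) := by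
  have h := map_sum (⟨⟨Real.toEReal, EReal.coe_zero⟩, EReal.coe_add⟩ : ℝ →+ EReal)
    (fun m => lam m * c m) Finset.univ
  exact h.trans (Finset.sum_congr rfl fun m _ => EReal.coe_mul _ _)

/-- Theorem 2.1 of the paper: the constrained splitting value `F^g(x, γ)`
equals the concavification of the bivariate function `f^g` on `X × ℝ` at `(x, γ)`. -/
theorem constrained_cav_eq_cav_bivariate {d : ℕ} (X : Set (Fin d → ℝ)) (hX : Convex ℝ X)
    (f g : (Fin d → ℝ) → EReal)
    (hf : ∀ z ∈ X, f z ≠ ⊤) (hg : ∀ z ∈ X, g z ≠ ⊤)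
    (x : Fin d → ℝ) (hx : x ∈ X) (γ : ℝ) :
    Fg X f g x γ = cav (X ×ˢ (Set.univ : Set ℝ)) (fgAux f g) (x, γ) := by
  refine le_antisymm (sSup_le ?_) (sSup_le ?_)
  · rintro v ⟨K, lam, pts, h0, h1, hX', hsum, hγ, rfl⟩
    have hgb : ∀ m, 0 < lam m → ((g (pts m)).toReal : EReal) = g (pts m) := fun m hm =>
      EReal.coe_toReal (hg _ (hX' m)) (ne_bot_of_weighted_sum_ne_bot
        (u := fun m => g (pts m)) (ne_bot_of_le_ne_bot (EReal.coe_ne_bot γ) hγ) hm)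
    set s : ℝ := ∑ m, lam m * (g (pts m)).toReal with hs
    have hγs : γ ≤ s := by
      rw [← EReal.coe_le_coe_iff, hs, coe_weighted_sum]
      refine hγ.trans (Finset.sum_le_sum fun m _ => ?_)
      rcases (h0 m).eq_or_lt with h | h
      · simp [← h]
      · rw [hgb m h]
    refine le_sSup ⟨K, lam, fun m => (pts m, (g (pts m)).toReal - (s - γ)), h0, h1,
      fun m => ⟨hX' m, trivial⟩, ?_, ?_⟩
    · refine Prod.ext ?_ ?_
      · simpa [Prod.fst_sum] using hsum
      · simp only [Prod.snd_sum, Prod.smul_snd, smul_eq_mul, mul_sub, Finset.sum_sub_distrib,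
          ← Finset.sum_mul, h1]
        rw [← hs]
        ring
    · refine Finset.sum_congr rfl fun m _ => ?_
      rcases (h0 m).eq_or_lt with h | h
      · simp [← h]
      · have hle : (((g (pts m)).toReal - (s - γ) : ℝ) : EReal) ≤ g (pts m) := by
          conv_rhs => rw [← hgb m h]
          exact EReal.coe_le_coe_iff.2 (by linarith)
        simp only [fgAux]
        rw [if_pos hle]
  · rintro v ⟨K, lam, pts, h0, h1, hX', hsum, rfl⟩
    by_cases hbot : ∑ m, (lam m : EReal) * fgAux f g (pts m) = ⊥
    · rw [hbot]
      exact bot_le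
    have hle : ∀ m, 0 < lam m → ((pts m).2 : EReal) ≤ g (pts m).1 := fun m hm => by
      by_contra hn
      exact ne_bot_of_weighted_sum_ne_bot (u := fun m => fgAux f g (pts m)) hbot hm (if_neg hn)
    refine le_sSup ⟨K, lam, fun m => (pts m).1, h0, h1, fun m => (hX' m).1, ?_, ?_, ?_⟩
    · simpa [Prod.fst_sum] using congrArg Prod.fst hsum
    · have h2 : ∑ m, lam m * (pts m).2 = γ := by
        simpa [Prod.snd_sum] using congrArg Prod.snd hsum
      rw [← h2, coe_weighted_sum]
      refine Finset.sum_le_sum fun m _ => ?_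
      rcases (h0 m).eq_or_lt with h | h
      · simp [← h]
      · exact mul_le_mul_of_nonneg_left (hle m h) (EReal.coe_nonneg.2 (h0 m))
    · refine Finset.sum_congr rfl fun m _ => ?_
      rcases (h0 m).eq_or_lt with h | h
      · simp [← h]
      · simp only [fgAux]
        rw [if_pos (hle m h)]
end

section
/- For every persuasion problem, every μ ∈ Δ(Ω) and every c ≥ 0, V(μ, c) equals the concavification of the function u^H_S : Δ(Ω) × ℝ → ℝ ∪ {−∞}, defined by u^H_S(ν, η) = u*_S(ν) if η ≤ H(ν) and u^H_S(ν, η) = −∞ otherwise, evaluated at the point (μ, H(μ) − c). -/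
/-!
A splitting of `μ` that meets the information constraint is the same thing as a splitting of
`(μ, H(μ) - c)` in `Δ(Ω) × ℝ` into points `(ν_m, η_m)` below the graph of `H`. From such points,
`H(μ) - c = ∑ λ_m η_m ≤ ∑ λ_m H(ν_m)`. Conversely the slack
`δ = ∑ λ_m H(ν_m) - (H(μ) - c) ≥ 0` is absorbed by taking `η_m = H(ν_m) - δ`.
Families putting positive weight on a point above the graph have value `-∞`, and points of weight
zero are harmless since `0 * ⊥ = 0` in `EReal`. As `VvalF` is a real supremum, it also has to be
checked that its defining set is nonempty (no information is feasible, as `0 ≤ c`) and bounded.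
-/

open scoped BigOperators

/-- Shannon entropy (base 2) of a belief given as a function `Ω → ℝ`. -/
noncomputable def entropyF {Ω : Type*} [Fintype Ω] (q : Ω → ℝ) : ℝ :=
  -∑ s, q s * Real.logb 2 (q s)

/-- The set of optimal actions of the receiver at belief `ν`. -/
def AstarF {Ω A : Type*} [Fintype Ω] (uR : Ω → A → ℝ) (ν : Ω → ℝ) : Set A :=
  { a | ∀ b, ∑ ω, ν ω * uR ω b ≤ ∑ ω, ν ω * uR ω a }

/-- The robust payoff of the sender at belief `ν`. -/
noncomputable def uStarF {Ω A : Type*} [Fintype Ω] (uS uR : Ω → A → ℝ) (ν : Ω → ℝ) : ℝ :=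
  sInf { v | ∃ a ∈ AstarF uR ν, v = ∑ ω, ν ω * uS ω a }

/-- Value of the optimal splitting problem with information constraint `c`. -/
noncomputable def VvalF {Ω A : Type*} [Fintype Ω] [Fintype A]
    (uS uR : Ω → A → ℝ) (μ : Ω → ℝ) (c : ℝ) : ℝ :=
  sSup { v : ℝ | ∃ (K : ℕ) (lam : Fin K → ℝ) (nu : Fin K → (Ω → ℝ)),
    (∀ m, 0 ≤ lam m) ∧ (∑ m, lam m = 1) ∧ (∀ m, nu m ∈ stdSimplex ℝ Ω) ∧
    (∑ m, lam m • nu m = μ) ∧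
    entropyF μ - ∑ m, lam m * entropyF (nu m) ≤ c ∧
    v = ∑ m, lam m * uStarF uS uR (nu m) }

open scoped Classical

/-- The bivariate function `u^H_S(ν, η) = u*_S(ν)` if `η ≤ H(ν)` and `−∞` otherwise. -/
noncomputable def uHS {Ω A : Type*} [Fintype Ω] [Fintype A] (uS uR : Ω → A → ℝ) :
    (Ω → ℝ) × ℝ → EReal :=
  fun q => if q.2 ≤ entropyF q.1 then ((uStarF uS uR q.1 : ℝ) : EReal) else ⊥

lemma uStarF_le_sum_abs {Ω A : Type*} [Fintype Ω] [Fintype A] (uS uR : Ω → A → ℝ)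
    {ν : Ω → ℝ} (hν : ν ∈ stdSimplex ℝ Ω) :
    uStarF uS uR ν ≤ ∑ ω, ∑ a, |uS ω a| := by
  unfold uStarF
  rcases Set.eq_empty_or_nonempty { v | ∃ a ∈ AstarF uR ν, v = ∑ ω, ν ω * uS ω a } with h | ⟨v, hv⟩
  · -- here `sInf ∅ = 0`; the bound still holds, so existence of an optimal action is not required
    rw [h, Real.sInf_empty]
    positivity
  · have hbdd : BddBelow { v | ∃ a ∈ AstarF uR ν, v = ∑ ω, ν ω * uS ω a } := by
      refine ((Set.finite_range fun a => ∑ ω, ν ω * uS ω a).subset ?_).bddBelow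
      rintro _ ⟨a, -, rfl⟩
      exact ⟨a, rfl⟩
    refine (csInf_le hbdd hv).trans ?_
    obtain ⟨a, -, rfl⟩ := hv
    refine Finset.sum_le_sum fun ω _ => ?_
    have h1 : ν ω ≤ 1 := by
      rw [← hν.2]
      exact Finset.single_le_sum (fun i _ => hν.1 i) (Finset.mem_univ ω)
    calc ν ω * uS ω a ≤ ν ω * |uS ω a| := mul_le_mul_of_nonneg_left (le_abs_self _) (hν.1 ω)
      _ ≤ |uS ω a| := mul_le_of_le_one_left (abs_nonneg _) h1
      _ ≤ ∑ b, |uS ω b| :=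
        Finset.single_le_sum (f := fun b => |uS ω b|) (fun _ _ => abs_nonneg _) (Finset.mem_univ a)

lemma ereal_coe_sum {ι : Type*} (s : Finset ι) (f : ι → ℝ) :
    ((∑ i ∈ s, f i : ℝ) : EReal) = ∑ i ∈ s, (f i : EReal) :=
  map_sum (⟨⟨Real.toEReal, EReal.coe_zero⟩, EReal.coe_add⟩ : ℝ →+ EReal) f s

lemma ereal_sum_eq_bot {ι : Type*} [Fintype ι] (f : ι → EReal) (i : ι) (h : f i = ⊥) :
    ∑ j, f j = ⊥ := by
  classical
  rw [← Finset.add_sum_erase _ _ (Finset.mem_univ i), h, EReal.bot_add]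

/-- Corollary 2, point 1 of the paper: `V(μ, c)` is the concavification of
`u^H_S` on `Δ(Ω) × ℝ` evaluated at `(μ, H(μ) − c)`. -/
theorem V_eq_cav_uHS {Ω A : Type*} [Fintype Ω] [Fintype A] [Nonempty Ω] [Nonempty A]
    (uS uR : Ω → A → ℝ) (μ : Ω → ℝ) (hμ : μ ∈ stdSimplex ℝ Ω) (c : ℝ) (hc : 0 ≤ c) :
    (VvalF uS uR μ c : EReal) =
      cav (stdSimplex ℝ Ω ×ˢ (Set.univ : Set ℝ)) (uHS uS uR) (μ, entropyF μ - c) := by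
  unfold VvalF cav
  set S := { v : ℝ | ∃ (K : ℕ) (lam : Fin K → ℝ) (nu : Fin K → (Ω → ℝ)),
    (∀ m, 0 ≤ lam m) ∧ (∑ m, lam m = 1) ∧ (∀ m, nu m ∈ stdSimplex ℝ Ω) ∧
    (∑ m, lam m • nu m = μ) ∧
    entropyF μ - ∑ m, lam m * entropyF (nu m) ≤ c ∧
    v = ∑ m, lam m * uStarF uS uR (nu m) } with hS
  have hne : S.Nonempty := by
    refine ⟨_, 1, fun _ => 1, fun _ => μ, ?_, ?_, fun _ => hμ, ?_, ?_, rfl⟩ <;> simp [hc]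
  have hbdd : BddAbove S := by
    refine ⟨∑ ω, ∑ a, |uS ω a|, ?_⟩
    rintro _ ⟨K, lam, nu, h0, h1, hnu, -, -, rfl⟩
    calc ∑ m, lam m * uStarF uS uR (nu m) ≤ ∑ m, lam m * ∑ ω, ∑ a, |uS ω a| :=
          Finset.sum_le_sum fun m _ =>
            mul_le_mul_of_nonneg_left (uStarF_le_sum_abs uS uR (hnu m)) (h0 m)
      _ = ∑ ω, ∑ a, |uS ω a| := by rw [← Finset.sum_mul, h1, one_mul]
  apply le_antisymm
  · set T := sSup { v : EReal | ∃ (K : ℕ) (lam : Fin K → ℝ) (pts : Fin K → (Ω → ℝ) × ℝ),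
      (∀ m, 0 ≤ lam m) ∧ (∑ m, lam m = 1) ∧
      (∀ m, pts m ∈ stdSimplex ℝ Ω ×ˢ (Set.univ : Set ℝ)) ∧
      (∑ m, lam m • pts m = (μ, entropyF μ - c)) ∧
      v = ∑ m, (lam m : EReal) * uHS uS uR (pts m) }
    have key : ∀ v ∈ S, (v : EReal) ≤ T := by
      rintro _ ⟨K, lam, nu, h0, h1, hnu, hsum, hent, rfl⟩
      apply le_sSup
      -- all entropies are lowered by the common slack of the information constraint
      set δ : ℝ := ∑ m, lam m * entropyF (nu m) - (entropyF μ - c) with hδ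
      have hδ0 : 0 ≤ δ := by linarith
      refine ⟨K, lam, fun m => (nu m, entropyF (nu m) - δ), h0, h1,
        fun m => ⟨hnu m, trivial⟩, ?_, ?_⟩
      · refine Prod.ext ?_ ?_
        · simpa [Prod.fst_sum] using hsum
        · simp only [Prod.snd_sum, Prod.smul_snd, smul_eq_mul, mul_sub,
            Finset.sum_sub_distrib, ← Finset.sum_mul, h1]
          rw [hδ]
          ring
      · rw [ereal_coe_sum]
        refine Finset.sum_congr rfl fun m _ => ?_
        simp [uHS, hδ0, EReal.coe_mul]
    obtain ⟨v₀, hv₀⟩ := hne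
    induction hT : T with
    | bot =>
      have := key v₀ hv₀
      rw [hT] at this
      exact absurd (le_bot_iff.mp this) (EReal.coe_ne_bot _)
    | top => exact le_top
    | coe t =>
      rw [EReal.coe_le_coe_iff]
      refine csSup_le ⟨v₀, hv₀⟩ fun v hv => ?_
      have := key v hv
      rwa [hT, EReal.coe_le_coe_iff] at this
  · apply sSup_le
    rintro _ ⟨K, lam, pts, h0, h1, hpts, hsum, rfl⟩
    by_cases hbad : ∃ m, 0 < lam m ∧ ¬ (pts m).2 ≤ entropyF (pts m).1
    · obtain ⟨m, hm, hm'⟩ := hbad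
      rw [ereal_sum_eq_bot _ m]
      · exact bot_le
      · simp only [uHS, if_neg hm']
        exact EReal.coe_mul_bot_of_pos hm
    · push Not at hbad
      have hval : ∑ m, (lam m : EReal) * uHS uS uR (pts m)
          = ((∑ m, lam m * uStarF uS uR (pts m).1 : ℝ) : EReal) := by
        rw [ereal_coe_sum]
        refine Finset.sum_congr rfl fun m _ => ?_
        rcases (h0 m).eq_or_lt with h | h
        · simp [← h]
        · simp [uHS, hbad m h, EReal.coe_mul]
      rw [hval, EReal.coe_le_coe_iff]
      refine le_csSup hbdd ⟨K, lam, fun m => (pts m).1, h0, h1, fun m => (hpts m).1, ?_, ?_, rfl⟩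
      · simpa [Prod.fst_sum] using congrArg Prod.fst hsum
      · have h2 : ∑ m, lam m * (pts m).2 = entropyF μ - c := by
          simpa [Prod.snd_sum] using congrArg Prod.snd hsum
        have h3 : ∑ m, lam m * (pts m).2 ≤ ∑ m, lam m * entropyF (pts m).1 := by
          refine Finset.sum_le_sum fun m _ => ?_
          rcases (h0 m).eq_or_lt with h | h
          · simp [← h]
          · exact mul_le_mul_of_nonneg_left (hbad m h) h.le
        linarith
end

section
/- For every persuasion problem, every μ ∈ Δ(Ω) and every c ≥ 0, the supremum defining V(μ, c) is unchanged if it is restricted to splittings of μ consisting of at most min{|A|, |Ω| + 1} posteriors; that is, V(μ,c) = sup { Σ_{m=1}^{K} λ_m u*_S(ν_m) : K ≤ min{|A|, |Ω|+1}, (λ_m, ν_m)_{m=1}^{K} a splitting of μ with H(μ) − Σ_m λ_m H(ν_m) ≤ c }. -/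
/-!
A splitting with more than `min {|A|, |Ω| + 1}` posteriors can be shortened by one posterior
without lowering its value and without raising the information it reveals. Hence every
attainable value is dominated by one attained with few posteriors, and the suprema agree.

There are two ways to shorten.

* More than `|A|` posteriors (`exists_shorter_of_card_action_lt`): two of them share an optimal
  action of the receiver. Replace them by their barycentre. Because a common optimal action
  exists, an action optimal at the barycentre is optimal at both posteriors, so the barycentre's
  robust payoff is at least the average of the two (`uStar_merge_le`); by concavity the entropy
  does not decrease (`entropy_merge_le`).
* More than `|Ω| + 1` posteriors (`exists_shorter_of_card_state_lt`): the vectors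
  `(ν_m, H(ν_m))` in `ℝ^{|Ω| + 1}` are linearly dependent. Moving the weights along a dependency,
  oriented so that the payoff does not fall, until one weight vanishes keeps both the mean
  posterior and the mean entropy.
-/

open scoped BigOperators

/-! ### Robust payoff -/

section RobustPayoff

variable {Ω A : Type*} [Fintype Ω] [Fintype A]

theorem Astar_nonempty [Nonempty A] (uR : Ω → A → ℝ) (ν : PDist Ω) : (Astar uR ν).Nonempty := by
  obtain ⟨a, -, ha⟩ := Finset.exists_max_image (Finset.univ : Finset A)
    (fun a => ∑ ω, ν.p ω * uR ω a) Finset.univ_nonempty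
  exact ⟨a, fun b => ha b (Finset.mem_univ b)⟩

theorem uStar_set_finite (uS uR : Ω → A → ℝ) (ν : PDist Ω) :
    {v | ∃ a ∈ Astar uR ν, v = ∑ ω, ν.p ω * uS ω a}.Finite := by
  refine (Set.finite_range fun a => ∑ ω, ν.p ω * uS ω a).subset ?_
  rintro v ⟨a, -, rfl⟩
  exact ⟨a, rfl⟩

theorem uStar_le (uS uR : Ω → A → ℝ) (ν : PDist Ω) {a : A} (ha : a ∈ Astar uR ν) :
    uStar uS uR ν ≤ ∑ ω, ν.p ω * uS ω a :=
  csInf_le (uStar_set_finite uS uR ν).bddBelow ⟨a, ha, rfl⟩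

theorem exists_uStar_eq [Nonempty A] (uS uR : Ω → A → ℝ) (ν : PDist Ω) :
    ∃ a ∈ Astar uR ν, uStar uS uR ν = ∑ ω, ν.p ω * uS ω a := by
  obtain ⟨a, ha⟩ := Astar_nonempty uR ν
  have hne : {v | ∃ a ∈ Astar uR ν, v = ∑ ω, ν.p ω * uS ω a}.Nonempty := ⟨_, a, ha, rfl⟩
  exact hne.csInf_mem (uStar_set_finite uS uR ν)

end RobustPayoff

/-! ### Merging two posteriors -/

section Merge

variable {Ω A : Type*} [Fintype Ω]

/-- The barycentre of two posteriors with (unnormalised) weights `x` and `y`. -/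
noncomputable def mergeDist (x y : ℝ) (hx : 0 < x) (hy : 0 < y) (p q : PDist Ω) : PDist Ω where
  p ω := x / (x + y) * p.p ω + y / (x + y) * q.p ω
  nonneg ω := by
    have := p.nonneg ω
    have := q.nonneg ω
    positivity
  sum_one := by
    rw [Finset.sum_add_distrib, ← Finset.mul_sum, ← Finset.mul_sum, p.sum_one, q.sum_one]
    field_simp

theorem mergeDist_mul (x y : ℝ) (hx : 0 < x) (hy : 0 < y) (p q : PDist Ω) (ω : Ω) :
    (x + y) * (mergeDist x y hx hy p q).p ω = x * p.p ω + y * q.p ω := by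
  simp only [mergeDist]
  field_simp

theorem mergeDist_sum (x y : ℝ) (hx : 0 < x) (hy : 0 < y) (p q : PDist Ω) (f : Ω → ℝ) :
    (x + y) * ∑ ω, (mergeDist x y hx hy p q).p ω * f ω
      = x * ∑ ω, p.p ω * f ω + y * ∑ ω, q.p ω * f ω := by
  simp only [Finset.mul_sum, ← Finset.sum_add_distrib]
  refine Finset.sum_congr rfl fun ω _ => ?_
  rw [← mul_assoc, mergeDist_mul]
  ring

theorem entropy_eq_negMulLog (q : PDist Ω) :
    entropy q = (∑ ω, Real.negMulLog (q.p ω)) / Real.log 2 := by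
  simp only [entropy, Real.logb, Real.negMulLog, Finset.sum_div, ← Finset.sum_neg_distrib]
  exact Finset.sum_congr rfl fun ω _ => by ring

theorem entropy_merge_le (x y : ℝ) (hx : 0 < x) (hy : 0 < y) (p q : PDist Ω) :
    x * entropy p + y * entropy q ≤ (x + y) * entropy (mergeDist x y hx hy p q) := by
  have key : x * ∑ ω, Real.negMulLog (p.p ω) + y * ∑ ω, Real.negMulLog (q.p ω)
      ≤ (x + y) * ∑ ω, Real.negMulLog ((mergeDist x y hx hy p q).p ω) := by
    simp only [Finset.mul_sum, ← Finset.sum_add_distrib]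
    refine Finset.sum_le_sum fun ω _ => ?_
    have h := Real.concaveOn_negMulLog.2 (p.nonneg ω) (q.nonneg ω)
      (show 0 ≤ x / (x + y) by positivity) (show 0 ≤ y / (x + y) by positivity)
      (by field_simp)
    simp only [smul_eq_mul] at h
    have h2 := mul_le_mul_of_nonneg_left h (show 0 ≤ x + y by positivity)
    refine le_trans (le_of_eq ?_) h2
    field_simp
  have hl : 0 < Real.log 2 := Real.log_pos (by norm_num)
  simp only [entropy_eq_negMulLog]
  have := div_le_div_of_nonneg_right key hl.le
  calc _ = _ := by ring
    _ ≤ _ := this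
    _ = _ := by ring

/-- The robust payoff is superadditive along a segment whose endpoints share an optimal action:
there, optimality at an interior point forces optimality at both endpoints. -/
theorem uStar_merge_le [Fintype A] [Nonempty A] (uS uR : Ω → A → ℝ) (x y : ℝ)
    (hx : 0 < x) (hy : 0 < y) (p q : PDist Ω) (a : A) (hp : a ∈ Astar uR p) (hq : a ∈ Astar uR q) :
    x * uStar uS uR p + y * uStar uS uR q
      ≤ (x + y) * uStar uS uR (mergeDist x y hx hy p q) := by
  obtain ⟨b, hb, hbe⟩ := exists_uStar_eq uS uR (mergeDist x y hx hy p q)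
  have hab := mul_le_mul_of_nonneg_left (hb a) (show 0 ≤ x + y by positivity)
  rw [mergeDist_sum, mergeDist_sum] at hab
  have h1 := mul_le_mul_of_nonneg_left (hp b) hx.le
  have h2 := mul_le_mul_of_nonneg_left (hq b) hy.le
  have hbp : b ∈ Astar uR p := fun e =>
    (hp e).trans (le_of_mul_le_mul_left (by linarith) hx)
  have hbq : b ∈ Astar uR q := fun e =>
    (hq e).trans (le_of_mul_le_mul_left (by linarith) hy)
  rw [hbe, mergeDist_sum]
  exact add_le_add (mul_le_mul_of_nonneg_left (uStar_le uS uR p hbp) hx.le)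
    (mul_le_mul_of_nonneg_left (uStar_le uS uR q hbq) hy.le)

end Merge

/-! ### Shortening a splitting -/

section Shorten

variable {Ω A : Type*} [Fintype Ω]

/-- A splitting of `μ` into `n` posteriors whose mean entropy is at least `h` and whose mean
robust payoff is at least `v` exists. -/
def Achieves (uS uR : Ω → A → ℝ) (μ : PDist Ω) (n : ℕ) (h v : ℝ) : Prop :=
  ∃ (lam : Fin n → ℝ) (nu : Fin n → PDist Ω), IsSplitting lam nu μ ∧
    h ≤ ∑ m, lam m * entropy (nu m) ∧ v ≤ ∑ m, lam m * uStar uS uR (nu m)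

theorem achieves_of_zero (uS uR : Ω → A → ℝ) (μ : PDist Ω) {n : ℕ} {h v : ℝ}
    (lam : Fin (n + 1) → ℝ) (nu : Fin (n + 1) → PDist Ω) (hs : IsSplitting lam nu μ)
    (hh : h ≤ ∑ m, lam m * entropy (nu m)) (hv : v ≤ ∑ m, lam m * uStar uS uR (nu m))
    (i : Fin (n + 1)) (hi : lam i = 0) : Achieves uS uR μ n h v := by
  obtain ⟨h0, h1, h2⟩ := hs
  refine ⟨fun m => lam (i.succAbove m), fun m => nu (i.succAbove m), ⟨fun m => h0 _, ?_, ?_⟩,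
    ?_, ?_⟩
  · simpa [Fin.sum_univ_succAbove _ i, hi] using h1
  · intro ω
    simpa [Fin.sum_univ_succAbove _ i, hi] using h2 ω
  · simpa [Fin.sum_univ_succAbove _ i, hi] using hh
  · simpa [Fin.sum_univ_succAbove _ i, hi] using hv

theorem sum_sub_sum_eq_of_off_pair {ι : Type*} [Fintype ι] [DecidableEq ι] {i j : ι}
    (hij : i ≠ j) (F G : ι → ℝ) (hFG : ∀ m, m ≠ i ∧ m ≠ j → F m = G m) :
    ∑ m, F m - ∑ m, G m = (F i - G i) + (F j - G j) := by
  rw [← Finset.sum_sub_distrib]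
  exact Fintype.sum_eq_add i j hij fun m hm => by rw [hFG m hm, sub_self]

theorem exists_shorter_of_card_action_lt [Fintype A] [Nonempty A] (uS uR : Ω → A → ℝ)
    (μ : PDist Ω) {n : ℕ} {h v : ℝ} (hn : Fintype.card A < n + 1)
    (hach : Achieves uS uR μ (n + 1) h v) : Achieves uS uR μ n h v := by
  obtain ⟨lam, nu, ⟨h0, h1, h2⟩, hh, hv⟩ := hach
  choose act hact using fun m => Astar_nonempty uR (nu m)
  obtain ⟨i, j, hij, he⟩ := Fintype.exists_ne_map_eq_of_card_lt act (by simpa using hn)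
  rcases (h0 i).eq_or_lt with hi | hi
  · exact achieves_of_zero uS uR μ lam nu ⟨h0, h1, h2⟩ hh hv i hi.symm
  rcases (h0 j).eq_or_lt with hj | hj
  · exact achieves_of_zero uS uR μ lam nu ⟨h0, h1, h2⟩ hh hv j hj.symm
  set ν := mergeDist (lam i) (lam j) hi hj (nu i) (nu j) with hν
  -- The weight of `j` is moved to `i`, where the barycentre now sits.
  set lam' : Fin (n + 1) → ℝ := fun m => if m = i then lam i + lam j else if m = j then 0 else lam m
    with hlam'
  set nu' : Fin (n + 1) → PDist Ω := fun m => if m = i then ν else nu m with hnu'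
  have li : lam' i = lam i + lam j := by simp [hlam']
  have lj : lam' j = 0 := by simp [hlam', hij.symm]
  have ni : nu' i = ν := by simp [hnu']
  have lo : ∀ m, m ≠ i ∧ m ≠ j → lam' m = lam m := fun m hm => by simp [hlam', hm.1, hm.2]
  have no : ∀ m, m ≠ i ∧ m ≠ j → nu' m = nu m := fun m hm => by simp [hnu', hm.1]
  have key : ∀ f : PDist Ω → ℝ, ∑ m, lam' m * f (nu' m) - ∑ m, lam m * f (nu m)
      = (lam i + lam j) * f ν - (lam i * f (nu i) + lam j * f (nu j)) := by
    intro f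
    rw [sum_sub_sum_eq_of_off_pair hij (fun m => lam' m * f (nu' m)) (fun m => lam m * f (nu m))
      fun m hm => by simp only [lo m hm, no m hm]]
    simp only [li, lj, ni]
    ring
  refine achieves_of_zero uS uR μ lam' nu' ⟨?_, ?_, ?_⟩ ?_ ?_ j lj
  · intro m
    simp only [hlam']
    split_ifs
    · positivity
    · exact le_rfl
    · exact h0 m
  · have := key fun _ => 1
    simp only [mul_one] at this
    linarith
  · intro ω
    have := key fun q => q.p ω
    have := mergeDist_mul (lam i) (lam j) hi hj (nu i) (nu j) ω
    have := h2 ω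
    simp only [← hν] at *
    linarith
  · have := key entropy
    have := entropy_merge_le (lam i) (lam j) hi hj (nu i) (nu j)
    simp only [← hν] at *
    linarith
  · have := key (uStar uS uR)
    have := uStar_merge_le uS uR (lam i) (lam j) hi hj (nu i) (nu j) (act i) (hact i)
      (he ▸ hact j)
    simp only [← hν] at *
    linarith

/-- A nonnegative vector moved along a direction with a negative entry reaches the boundary of
the orthant. -/
theorem exists_step_to_boundary {ι : Type*} [Fintype ι] (lam d : ι → ℝ) (h0 : ∀ m, 0 ≤ lam m)
    (hd : ∃ m, d m < 0) : ∃ t : ℝ, 0 ≤ t ∧ (∀ m, 0 ≤ lam m + t * d m) ∧ ∃ i, lam i + t * d i = 0 := by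
  classical
  obtain ⟨k, hk⟩ := hd
  obtain ⟨i, hi, hmin⟩ := Finset.exists_min_image (Finset.univ.filter fun m => d m < 0)
    (fun m => lam m / (-d m)) ⟨k, by simpa using hk⟩
  have hi' : d i < 0 := by simpa using hi
  have ht : 0 ≤ lam i / (-d i) := div_nonneg (h0 i) (by linarith)
  refine ⟨lam i / (-d i), ht, fun m => ?_, i, ?_⟩
  · rcases lt_or_ge (d m) 0 with hm | hm
    · have := hmin m (by simpa using hm)
      rw [le_div_iff₀ (by linarith)] at this
      linarith
    · have := h0 m
      positivity
  · have : d i ≠ 0 := hi'.ne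
    field_simp
    ring

theorem exists_shorter_of_card_state_lt (uS uR : Ω → A → ℝ)
    (μ : PDist Ω) {n : ℕ} {h v : ℝ} (hn : Fintype.card Ω + 1 < n + 1)
    (hach : Achieves uS uR μ (n + 1) h v) : Achieves uS uR μ n h v := by
  obtain ⟨lam, nu, ⟨h0, h1, h2⟩, hh, hv⟩ := hach
  have hdep : ¬ LinearIndependent ℝ
      (fun m : Fin (n + 1) => ((nu m).p, entropy (nu m)) : Fin (n + 1) → (Ω → ℝ) × ℝ) := by
    intro hli
    have := hli.fintype_card_le_finrank
    simp at this
    omega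
  obtain ⟨g, hg, k, hk⟩ := Fintype.not_linearIndependent_iff.1 hdep
  -- Orient the dependency so that the payoff does not fall.
  obtain ⟨d, hd, hdk, hdu⟩ : ∃ d : Fin (n + 1) → ℝ,
      (∑ m, d m • ((nu m).p, entropy (nu m)) = 0) ∧ d k ≠ 0 ∧
        0 ≤ ∑ m, d m * uStar uS uR (nu m) := by
    rcases le_total 0 (∑ m, g m * uStar uS uR (nu m)) with hu | hu
    · exact ⟨g, hg, hk, hu⟩
    · refine ⟨fun m => -g m, ?_, neg_ne_zero.2 hk, ?_⟩
      · simp only [neg_smul, Finset.sum_neg_distrib, hg, neg_zero]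
      · simpa only [neg_mul, Finset.sum_neg_distrib, neg_nonneg] using hu
  have hdp : ∀ ω, ∑ m, d m * (nu m).p ω = 0 := by
    intro ω
    have := congrFun (congrArg Prod.fst hd) ω
    simpa [Prod.fst_sum] using this
  have hde : ∑ m, d m * entropy (nu m) = 0 := by
    have := congrArg Prod.snd hd
    simpa [Prod.snd_sum] using this
  have hd1 : ∑ m, d m = 0 := by
    calc ∑ m, d m = ∑ m, ∑ ω, d m * (nu m).p ω := by
          simp only [← Finset.mul_sum, PDist.sum_one, mul_one]
      _ = 0 := by
          rw [Finset.sum_comm]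
          simp only [hdp, Finset.sum_const_zero]
  have hneg : ∃ m, d m < 0 := by
    by_contra! hcon
    exact hdk ((Finset.sum_eq_zero_iff_of_nonneg fun m _ => hcon m).1 hd1 k (Finset.mem_univ k))
  obtain ⟨t, ht, htn, i, hi⟩ := exists_step_to_boundary lam d h0 hneg
  have lin : ∀ f : Fin (n + 1) → ℝ, ∑ m, (lam m + t * d m) * f m
      = ∑ m, lam m * f m + t * ∑ m, d m * f m := by
    intro f
    rw [Finset.mul_sum, ← Finset.sum_add_distrib]
    exact Finset.sum_congr rfl fun m _ => by ring
  refine achieves_of_zero uS uR μ (fun m => lam m + t * d m) nu ⟨htn, ?_, ?_⟩ ?_ ?_ i hi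
  · simp only [Finset.sum_add_distrib, ← Finset.mul_sum, hd1, h1, mul_zero, add_zero]
  · intro ω
    rw [lin fun m => (nu m).p ω, hdp, h2, mul_zero, add_zero]
  · rw [lin fun m => entropy (nu m), hde, mul_zero, add_zero]
    exact hh
  · rw [lin fun m => uStar uS uR (nu m)]
    have := mul_nonneg ht hdu
    linarith

theorem exists_achieves_le_min [Fintype A] [Nonempty A] (uS uR : Ω → A → ℝ)
    (μ : PDist Ω) {h v : ℝ} (n : ℕ) (hach : Achieves uS uR μ n h v) :
    ∃ K ≤ min (Fintype.card A) (Fintype.card Ω + 1), Achieves uS uR μ K h v := by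
  induction n with
  | zero => exact ⟨0, Nat.zero_le _, hach⟩
  | succ n ih =>
    rcases le_or_gt (n + 1) (min (Fintype.card A) (Fintype.card Ω + 1)) with hle | hlt
    · exact ⟨n + 1, hle, hach⟩
    · rcases min_lt_iff.1 hlt with hA | hΩ
      · exact ih (exists_shorter_of_card_action_lt uS uR μ hA hach)
      · exact ih (exists_shorter_of_card_state_lt uS uR μ hΩ hach)

end Shorten

/-- Corollary 3 of the paper: in the optimal splitting problem with
information constraint, the number of posteriors can be restricted to
`min {|A|, |Ω| + 1}` without changing the value. -/
theorem V_eq_sup_bounded_support {Ω A : Type*} [Fintype Ω] [Fintype A]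
    [Nonempty Ω] [Nonempty A]
    (uS uR : Ω → A → ℝ) (μ : PDist Ω) (c : ℝ) (hc : 0 ≤ c) :
    Vval uS uR μ c =
      sSup { v : ℝ | ∃ K : ℕ, K ≤ min (Fintype.card A) (Fintype.card Ω + 1) ∧
        ∃ (lam : Fin K → ℝ) (nu : Fin K → PDist Ω),
          IsSplitting lam nu μ ∧
          entropy μ - ∑ m, lam m * entropy (nu m) ≤ c ∧
          v = ∑ m, lam m * uStar uS uR (nu m) } := by
  -- Mutual domination suffices, even for sets that are empty or unbounded above.
  refine csSup_eq_csSup_of_forall_exists_le ?_ ?_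
  · rintro v ⟨n, lam, nu, hs, hi, hv⟩
    obtain ⟨K, hK, lam', nu', hs', hh, hv'⟩ := exists_achieves_le_min uS uR μ n
      (⟨lam, nu, hs, le_rfl, hv.le⟩ :
        Achieves uS uR μ n (∑ m, lam m * entropy (nu m)) v)
    exact ⟨_, ⟨K, hK, lam', nu', hs', by linarith, rfl⟩, hv'⟩
  · rintro v ⟨K, -, lam, nu, hs, hi, hv⟩
    exact ⟨v, ⟨K, lam, nu, hs, hi, hv⟩, le_rfl⟩
end

section
/- Suppose no two distinct actions in A are completely equivalent (i.e., there are no a ≠ b with u_S(ω,a) = u_S(ω,b) and u_R(ω,a) = u_R(ω,b) for all ω ∈ Ω). Then the set F^c = Δ(Ω) \ (F_R ∪ F_S) is open and dense in Δ(Ω), and for every ν ∈ F^c, the set Ã(ν) is a singleton. -/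
/-!
For a pair of non-equivalent actions `a, b`, the payoff difference
`ν ↦ ∑ ω, ν ω * (u ω a - u ω b)` is a linear functional that does not vanish at some vertex of the
simplex. Its non-vanishing locus is therefore open, and it is dense because a zero `ν` can be moved
slightly towards that vertex (`dense_ne_of_not_equiv`). There are finitely many pairs, so the
complement of `Findiff u` in the simplex is open and dense (`isOpen_dense_compl_Findiff`), and so is
the intersection of these sets for the two players.

Off both indifference sets, two elements of `AtildeF` give equal payoffs to the receiver and to the
sender, hence are equivalent for both players, hence equal; existence holds because `A` is finite.
-/

open scoped BigOperators

/-- The set of optimal actions of the receiver at belief `ν` that are worst for the sender. -/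
def AtildeF {Ω A : Type*} [Fintype Ω] (uS uR : Ω → A → ℝ) (ν : Ω → ℝ) : Set A :=
  { a | a ∈ AstarF uR ν ∧
    ∀ b ∈ AstarF uR ν, ∑ ω, ν ω * uS ω a ≤ ∑ ω, ν ω * uS ω b }

/-- The set of beliefs at which a player with payoff function `u` is indifferent between two
actions that are not equivalent for him. -/
def Findiff {Ω A : Type*} [Fintype Ω] (u : Ω → A → ℝ) : Set (Ω → ℝ) :=
  { ν | ∃ a b : A, ¬(∀ ω, u ω a = u ω b) ∧ ∑ ω, ν ω * u ω a = ∑ ω, ν ω * u ω b }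

theorem isOpen_ne_payoff {Ω A : Type*} [Fintype Ω] (u : Ω → A → ℝ) (a b : A) :
    IsOpen {x : stdSimplex ℝ Ω | ∑ ω, x.1 ω * u ω a ≠ ∑ ω, x.1 ω * u ω b} := by
  have hc : ∀ c : A, Continuous fun x : stdSimplex ℝ Ω => ∑ ω, x.1 ω * u ω c := fun c =>
    continuous_finsetSum _ fun ω _ =>
      ((continuous_apply ω).comp continuous_subtype_val).mul continuous_const
  exact isOpen_ne_fun (hc a) (hc b)

/-- If `a` and `b` differ at some vertex, then from a belief of indifference every proper step
towards that vertex breaks the tie, since the difference of payoffs is affine on the segment. -/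
theorem dense_ne_of_not_equiv {Ω A : Type*} [Fintype Ω] (u : Ω → A → ℝ) (a b : A)
    (hab : ¬ ∀ ω, u ω a = u ω b) :
    Dense {x : stdSimplex ℝ Ω | ∑ ω, x.1 ω * u ω a ≠ ∑ ω, x.1 ω * u ω b} := by
  classical
  push Not at hab
  obtain ⟨ω₀, h₀⟩ := hab
  intro x
  by_cases hx : ∑ ω, x.1 ω * u ω a = ∑ ω, x.1 ω * u ω b
  swap
  · exact subset_closure hx
  -- The segment from `x` to the vertex `ω₀`.
  let γ : ℝ → Ω → ℝ := fun t => (1 - t) • x.1 + t • Pi.single ω₀ (1 : ℝ)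
  have hγ : ∀ t ∈ Set.Icc (0 : ℝ) 1, γ t ∈ stdSimplex ℝ Ω := fun t ht =>
    convex_stdSimplex ℝ Ω x.2 (single_mem_stdSimplex ℝ ω₀) (by linarith [ht.2]) ht.1 (by ring)
  have hval : ∀ (t : ℝ) (c : A),
      ∑ ω, γ t ω * u ω c = (1 - t) * ∑ ω, x.1 ω * u ω c + t * u ω₀ c := by
    intro t c
    simp [γ, add_mul, Finset.sum_add_distrib, Finset.mul_sum, mul_assoc, Pi.single_apply]
  -- Projecting the parameter to `[0, 1]` makes the segment a total continuous map into the simplex.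
  let g : ℝ → stdSimplex ℝ Ω := fun t =>
    ⟨γ (Set.projIcc (0 : ℝ) 1 zero_le_one t), hγ _ (Set.projIcc (0 : ℝ) 1 zero_le_one t).2⟩
  have hg : Continuous g := by
    refine Continuous.subtype_mk ?_ _
    have hp : Continuous fun t : ℝ => ((Set.projIcc (0 : ℝ) 1 zero_le_one t : Set.Icc (0:ℝ) 1) : ℝ) :=
      continuous_subtype_val.comp continuous_projIcc
    exact ((continuous_const.sub hp).smul continuous_const).add (hp.smul continuous_const)
  have hg0 : g 0 = x := by
    apply Subtype.ext
    simp [g, γ]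
  have ht : Filter.Tendsto g (nhdsWithin 0 (Set.Ioi 0)) (nhds x) := by
    have h := hg.tendsto 0
    rw [hg0] at h
    exact h.mono_left nhdsWithin_le_nhds
  refine mem_closure_of_tendsto ht ?_
  filter_upwards [Ioo_mem_nhdsGT (zero_lt_one' ℝ)] with t htt
  have hp : (Set.projIcc (0 : ℝ) 1 zero_le_one t : ℝ) = t := by
    rw [Set.projIcc_of_mem zero_le_one ⟨htt.1.le, htt.2.le⟩]
  change ∑ ω, γ (Set.projIcc (0 : ℝ) 1 zero_le_one t) ω * u ω a ≠
    ∑ ω, γ (Set.projIcc (0 : ℝ) 1 zero_le_one t) ω * u ω b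
  rw [hp, hval, hval, hx]
  intro h
  exact h₀ (mul_left_cancel₀ htt.1.ne' (add_left_cancel h))

theorem isOpen_dense_compl_Findiff {Ω A : Type*} [Fintype Ω] [Fintype A] (u : Ω → A → ℝ) :
    IsOpen {x : stdSimplex ℝ Ω | x.1 ∉ Findiff u} ∧
      Dense {x : stdSimplex ℝ Ω | x.1 ∉ Findiff u} := by
  have heq : {x : stdSimplex ℝ Ω | x.1 ∉ Findiff u} =
      ⋂ p : {p : A × A // ¬ ∀ ω, u ω p.1 = u ω p.2},
        {x : stdSimplex ℝ Ω | ∑ ω, x.1 ω * u ω p.1.1 ≠ ∑ ω, x.1 ω * u ω p.1.2} := by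
    ext x
    simp only [Findiff, Set.mem_ofPred_eq, Set.mem_iInter, Subtype.forall, Prod.forall, ne_eq]
    exact ⟨fun h a b hab hs => h ⟨a, b, hab, hs⟩, fun h ⟨a, b, hab, hs⟩ => h a b hab hs⟩
  rw [heq]
  -- Density of the intersection uses that the compact simplex is a Baire space.
  exact ⟨isOpen_iInter_of_finite fun p => isOpen_ne_payoff u _ _,
    dense_iInter_of_isOpen (fun p => isOpen_ne_payoff u _ _)
      fun p => dense_ne_of_not_equiv u _ _ p.2⟩

/-- Claim 2 of the paper: if no two distinct actions are completely
equivalent, the set `F^c = Δ(Ω) \ (F_R ∪ F_S)` is open and dense in `Δ(Ω)`, and on it the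
worst optimal action `Ã(ν)` is a singleton. -/
theorem Fc_open_dense_singleton {Ω A : Type*} [Fintype Ω] [Fintype A]
    [Nonempty Ω] [Nonempty A] (uS uR : Ω → A → ℝ)
    (hdist : ∀ a b : A, (∀ ω, uS ω a = uS ω b) → (∀ ω, uR ω a = uR ω b) → a = b) :
    IsOpen (Subtype.val ⁻¹' (stdSimplex ℝ Ω \ (Findiff uR ∪ Findiff uS)) :
      Set (stdSimplex ℝ Ω)) ∧
    Dense (Subtype.val ⁻¹' (stdSimplex ℝ Ω \ (Findiff uR ∪ Findiff uS)) :
      Set (stdSimplex ℝ Ω)) ∧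
    ∀ ν ∈ stdSimplex ℝ Ω \ (Findiff uR ∪ Findiff uS), ∃ a : A, AtildeF uS uR ν = {a} := by
  have hset : (Subtype.val ⁻¹' (stdSimplex ℝ Ω \ (Findiff uR ∪ Findiff uS)) :
      Set (stdSimplex ℝ Ω)) =
      {x : stdSimplex ℝ Ω | x.1 ∉ Findiff uR} ∩ {x : stdSimplex ℝ Ω | x.1 ∉ Findiff uS} := by
    ext x
    simp [not_or]
  obtain ⟨hRo, hRd⟩ := isOpen_dense_compl_Findiff (Ω := Ω) uR
  obtain ⟨hSo, hSd⟩ := isOpen_dense_compl_Findiff (Ω := Ω) uS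
  refine ⟨hset ▸ hRo.inter hSo, hset ▸ hRd.inter_of_isOpen_left hSd hRo, ?_⟩
  rintro ν ⟨-, hν⟩
  rw [Set.mem_union, not_or] at hν
  obtain ⟨hR, hS⟩ := hν
  have hne : (AstarF uR ν).Nonempty := by
    obtain ⟨a, ha⟩ := Finite.exists_max fun a => ∑ ω, ν ω * uR ω a
    exact ⟨a, ha⟩
  obtain ⟨a, haR, haS⟩ := Set.exists_min_image (AstarF uR ν)
    (fun a => ∑ ω, ν ω * uS ω a) (Set.toFinite _) hne
  refine ⟨a, Set.eq_singleton_iff_unique_mem.2 ⟨⟨haR, haS⟩, ?_⟩⟩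
  rintro b ⟨hbR, hbS⟩
  refine hdist b a ?_ ?_
  · by_contra h
    exact hS ⟨b, a, h, le_antisymm (hbS a haR) (haS b hbR)⟩
  · by_contra h
    exact hR ⟨b, a, h, le_antisymm (haR b) (hbR a)⟩
end
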